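/- arXiv:2307.12859 — 3 statements merged into one kernel-verified Lean document; each statement's English description precedes it below -/
import Mathlib

section
/- Fix an integer base $g \geq 3$ and a nonempty proper subset $\mathcal{D} \subsetneq \{0,1,\dots,g-1\}$. Let $\mathcal{W}_{\mathcal{D}}$ be the set of positive integers all of whose base-$g$ digits lie in $\mathcal{D}$. Then the preimage $s^{-1}(\mathcal{W}_{\mathcal{D}}) = \{n : s(n) \in \mathcal{W}_{\mathcal{D}}\}$ has asymptotic density zero, i.e., $\lim_{x \to \infty} \frac{1}{x} \#\{n \leq x : s(n) \in \mathcal{W}_{\mathcal{D}}\} = 0$. -/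
/-!
For every fixed modulus `m`, almost all `n` satisfy `m ∣ σ(n)`: it is enough that some prime
`p ≡ -1 (mod m)` divides `n` exactly once (`dvd_sigma1`). The integers escaping a finite set `T` of
such primes form a periodic set of density at most `exp (-½ ∑ p ∈ T, 1 / p)`
(`count_forall_not_exactDiv`), which is arbitrarily small because the sum of `1 / p` over
`p ≡ -1 (mod m)` diverges (`not_summable_prime_inv`).

With `m = g ^ k`, almost all `n` therefore have `s(n) ≡ -n (mod g ^ k)`. If all digits of `s(n)` lie
in `D`, then the residue `-n mod g ^ k` is one of fewer than `2 * (g - 1) ^ k` integers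
(`allDigits_mod`, `card_allDigits_le`), so such `n` have density at most
`2 * ((g - 1) / g) ^ k`, which tends to `0` as `k` grows.
-/


open Filter

/-- The sum-of-divisors function `σ(n)`. -/
def sigma1 (n : ℕ) : ℕ := ∑ d ∈ n.divisors, d

/-- The sum of proper divisors `s(n) = σ(n) - n`. -/
def sOfN (n : ℕ) : ℕ := sigma1 n - n

/-! ### Divergence of the sum of prime reciprocals in a residue class -/

section
open ArithmeticFunction.vonMangoldt

/-- The sum of `1 / p` over the primes `p ≡ a (mod q)` diverges when `a` is a unit. If it converged,
the dominated convergence theorem would make `(x - 1) * ∑ log p / p ^ x` tend to `0` as `x → 1⁺`,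
against the lower bound `φ(q)⁻¹ / (x - 1) - C` for the L-series of the von Mangoldt function on the
residue class. -/
theorem not_summable_prime_inv {q : ℕ} [NeZero q] {a : ZMod q} (ha : IsUnit a) :
    ¬ Summable fun n : ℕ => if n.Prime ∧ (n : ZMod q) = a then (1 : ℝ) / n else 0 := by
  classical
  intro H
  set f : ℕ → ℝ := fun n => if n.Prime ∧ (n : ZMod q) = a then (1 : ℝ) / n else 0 with hf
  have hf0 : ∀ n, 0 ≤ f n := fun n => by simp only [hf]; split_ifs <;> positivity
  obtain ⟨C, hC⟩ := LSeries_residueClass_lower_bound ha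
  set h : ℕ → ℝ := fun n => (if n.Prime then 0 else residueClass a n) / n with hh
  have hS : Summable h := summable_residueClass_non_primes_div a
  have hh0 : ∀ n, 0 ≤ h n := fun n => by
    simp only [hh]
    have := residueClass_nonneg a n
    split_ifs <;> positivity
  -- With `u = t * log n`, this is `u * exp (-u) ∈ [0, 1]`; it equals `t * log n / n ^ t` for `n > 0`.
  set w : ℝ → ℕ → ℝ := fun t n => t * Real.log n * (Real.exp (-(t * Real.log n))) with hw
  have hw0 : ∀ t, 0 ≤ t → ∀ n, 0 ≤ w t n := fun t ht n => by
    have := Real.log_natCast_nonneg n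
    simp only [hw]; positivity
  have hw1 : ∀ t, 0 ≤ t → ∀ n, w t n ≤ 1 := fun t ht n => by
    simp only [hw]
    set u := t * Real.log n
    rw [Real.exp_neg, mul_inv_le_iff₀ (Real.exp_pos u)]
    linarith [Real.add_one_le_exp u]
  have hfw : ∀ t, 0 ≤ t → Summable fun n => f n * w t n := fun t ht =>
    Summable.of_nonneg_of_le (fun n => mul_nonneg (hf0 n) (hw0 t ht n))
      (fun n => mul_le_of_le_one_right (hf0 n) (hw1 t ht n)) H
  have lim : Tendsto (fun t => ∑' n, f n * w t n) (nhdsWithin 0 (Set.Ioi 0)) (nhds 0) := by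
    rw [← tsum_zero (α := ℝ) (β := ℕ)]
    refine tendsto_tsum_of_dominated_convergence H (fun n => ?_) ?_
    · have : Continuous fun t => f n * w t n := by simp only [hw]; fun_prop
      have := (this.tendsto 0).mono_left (nhdsWithin_le_nhds (s := Set.Ioi 0))
      simpa [hw] using this
    · filter_upwards [self_mem_nhdsWithin] with t ht n
      have ht : 0 ≤ t := by
        rw [tsum_zero] at ht
        exact le_of_lt ht
      rw [Real.norm_of_nonneg (mul_nonneg (hf0 n) (hw0 t ht n))]
      exact mul_le_of_le_one_right (hf0 n) (hw1 t ht n)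
  have key : ∀ t ∈ Set.Ioc (0 : ℝ) 1,
      (q.totient : ℝ)⁻¹ ≤ t * (C + ∑' n, h n) + ∑' n, f n * w t n := by
    rintro t ⟨ht0, ht1⟩
    have hlow := hC (x := 1 + t) ⟨by linarith, by linarith⟩
    have hterm : ∀ n : ℕ, residueClass a n / (n : ℝ) ^ (1 + t) ≤ h n + t⁻¹ * (f n * w t n) := by
      intro n
      rcases Nat.eq_zero_or_pos n with rfl | hn
      · simpa using add_nonneg (hh0 0) (mul_nonneg (inv_nonneg.2 ht0.le)
          (mul_nonneg (hf0 0) (hw0 t ht0.le 0)))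
      have hn' : (0 : ℝ) < n := by exact_mod_cast hn
      have hn1 : (1 : ℝ) ≤ n := by exact_mod_cast hn
      by_cases hp : n.Prime
      · by_cases hna : (n : ZMod q) = a
        · have hr : residueClass a n = Real.log n := by
            simp [residueClass, hna, ArithmeticFunction.vonMangoldt_apply_prime hp]
          have : h n = 0 := by simp [hh, hp]
          rw [hr, this, zero_add, Real.rpow_add hn', Real.rpow_one, Real.rpow_def_of_pos hn']
          simp only [hf, hw, hp, hna, and_self, if_true]
          rw [Real.exp_neg, mul_comm t (Real.log n)]
          apply le_of_eq
          field_simp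
        · have hr : residueClass a n = 0 := by simp [residueClass, hna]
          rw [hr, zero_div]
          exact add_nonneg (hh0 n) (mul_nonneg (inv_nonneg.2 ht0.le)
            (mul_nonneg (hf0 n) (hw0 t ht0.le n)))
      · have : residueClass a n / (n : ℝ) ^ (1 + t) ≤ h n := by
          simp only [hh, hp, if_false]
          refine div_le_div_of_nonneg_left (residueClass_nonneg a n) hn' ?_
          conv_lhs => rw [← Real.rpow_one (n : ℝ)]
          exact Real.rpow_le_rpow_of_exponent_le hn1 (by linarith)
        have := mul_nonneg (inv_nonneg.2 ht0.le) (mul_nonneg (hf0 n) (hw0 t ht0.le n))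
        linarith
    have hsum2 := hS.add ((hfw t ht0.le).mul_left t⁻¹)
    have hup := Summable.tsum_le_tsum hterm (Summable.of_nonneg_of_le
      (fun n => div_nonneg (residueClass_nonneg a n) (by positivity)) hterm hsum2) hsum2
    rw [hS.tsum_add ((hfw t ht0.le).mul_left t⁻¹), tsum_mul_left] at hup
    have h3 := hlow.trans hup
    rw [add_sub_cancel_left] at h3
    have h4 := mul_le_mul_of_nonneg_left h3 ht0.le
    have e1 : t * ((q.totient : ℝ)⁻¹ / t - C) = (q.totient : ℝ)⁻¹ - t * C := by
      field_simp
    have e2 : t * (∑' n, h n + t⁻¹ * ∑' n, f n * w t n)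
        = t * ∑' n, h n + ∑' n, f n * w t n := by
      field_simp
    rw [e1, e2] at h4
    linarith
  have lim2 : Tendsto (fun t => t * (C + ∑' n, h n) + ∑' n, f n * w t n)
      (nhdsWithin 0 (Set.Ioi 0)) (nhds 0) := by
    have h1 : Tendsto (fun t : ℝ => t * (C + ∑' n, h n)) (nhdsWithin 0 (Set.Ioi 0)) (nhds 0) := by
      have : Continuous fun t : ℝ => t * (C + ∑' n, h n) := by fun_prop
      simpa using (this.tendsto 0).mono_left (nhdsWithin_le_nhds (s := Set.Ioi 0))
    simpa using h1.add lim
  have hle : (q.totient : ℝ)⁻¹ ≤ 0 := by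
    refine ge_of_tendsto lim2 ?_
    filter_upwards [Ioc_mem_nhdsGT (zero_lt_one (α := ℝ))] with t ht using key t ht
  have : 0 < (q.totient : ℝ)⁻¹ := by
    have := Nat.totient_pos.2 (Nat.pos_of_neZero q)
    positivity
  linarith
end

theorem exists_finset_primes (q : ℕ) (hq : 0 < q) (R : ℝ) :
    ∃ T : Finset ℕ, (∀ p ∈ T, p.Prime ∧ q ∣ p + 1) ∧ R ≤ ∑ p ∈ T, (1 : ℝ) / p := by
  have : NeZero q := ⟨hq.ne'⟩
  have h := not_summable_prime_inv (q := q) (a := -1) (isUnit_one.neg)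
  by_contra! hcon
  apply h
  refine summable_of_sum_le (c := R) (fun n => ?_) (fun u => ?_)
  · dsimp only; split_ifs <;> positivity
  · rw [← Finset.sum_filter]
    refine (hcon _ fun p hp => ?_).le
    obtain ⟨hp1, hp2⟩ := (Finset.mem_filter.1 hp).2
    refine ⟨hp1, (ZMod.natCast_eq_zero_iff _ _).1 ?_⟩
    push_cast
    rw [hp2]; ring

section
open Classical

/-! ### Densities of periodic sets -/

/-- A periodic predicate holding for a proportion at most `δ` of a full period holds for at most
`δ * N + O(1)` of the integers below `N`. -/
theorem count_le_of_periodic {P : ℕ → Prop} {Q : ℕ} (hQ : 0 < Q)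
    (hP : Function.Periodic P Q) {δ : ℝ} (hδ : (Nat.count P Q : ℝ) ≤ δ * Q) (N : ℕ) :
    (Nat.count P N : ℝ) ≤ δ * N + Q := by
  have hshift : ∀ j, (fun k => P (Q * j + k)) = P := fun j => by
    funext k
    have := hP.nat_mul j k
    rw [add_comm, mul_comm]
    simpa using this
  have h1 : ∀ j, Nat.count P (Q * j) = j * Nat.count P Q := by
    intro j
    induction j with
    | zero => simp
    | succ j ih =>
      rw [Nat.mul_succ, Nat.count_add, ih, Nat.succ_mul]
      congr 1
      simp only [hshift]
  have h2 : Nat.count P N ≤ N / Q * Nat.count P Q + Q := by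
    conv_lhs => rw [← Nat.div_add_mod N Q]
    rw [Nat.count_add, h1]
    have := Nat.count_le (p := fun k => P (Q * (N / Q) + k)) (n := N % Q)
    have := Nat.mod_lt N hQ
    omega
  have h3 : (Nat.count P N : ℝ) ≤ ((N / Q : ℕ) : ℝ) * Nat.count P Q + Q := by exact_mod_cast h2
  have hQ' : (0 : ℝ) < Q := by exact_mod_cast hQ
  have hδ0 : 0 ≤ δ := by
    by_contra! hneg
    have : (0 : ℝ) ≤ Nat.count P Q := by positivity
    nlinarith
  have h4 : ((N / Q : ℕ) : ℝ) * Q ≤ N := by exact_mod_cast Nat.div_mul_le_self N Q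
  have h5 : ((N / Q : ℕ) : ℝ) * Nat.count P Q ≤ ((N / Q : ℕ) : ℝ) * (δ * Q) := by gcongr
  nlinarith

/-- Chinese remainder theorem, in the form of an upper bound: over coprime periods, densities of
periodic predicates multiply. -/
theorem count_and_le {P₁ P₂ : ℕ → Prop} {Q₁ Q₂ : ℕ} (h₁ : 0 < Q₁) (h₂ : 0 < Q₂)
    (hc : Q₁.Coprime Q₂)
    (hP₁ : Function.Periodic P₁ Q₁) (hP₂ : Function.Periodic P₂ Q₂) :
    Nat.count (fun n => P₁ n ∧ P₂ n) (Q₁ * Q₂) ≤ Nat.count P₁ Q₁ * Nat.count P₂ Q₂ := by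
  simp only [Nat.count_eq_card_filter_range]
  rw [← Finset.card_product]
  refine Finset.card_le_card_of_injOn (fun n => (n % Q₁, n % Q₂)) ?_ ?_
  · intro n hn
    simp only [Finset.coe_filter, Finset.mem_range, Set.mem_ofPred_eq] at hn
    simp only [Finset.coe_product, Set.mem_prod, Finset.coe_filter, Finset.mem_range,
      Set.mem_ofPred_eq]
    rw [hP₁.map_mod_nat, hP₂.map_mod_nat]
    exact ⟨⟨Nat.mod_lt _ h₁, hn.2.1⟩, ⟨Nat.mod_lt _ h₂, hn.2.2⟩⟩
  · intro m hm n hn hmn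
    simp only [Finset.coe_filter, Finset.mem_range, Set.mem_ofPred_eq] at hm hn
    simp only [Prod.mk.injEq] at hmn
    exact ((Nat.modEq_and_modEq_iff_modEq_mul hc).1 hmn).eq_of_lt_of_lt hm.1 hn.1

/-! ### Integers divisible exactly once by a prime of a given set -/

/-- The prime `p` divides `n` exactly once, i.e. `p ∥ n`. -/
def ExactDiv (p n : ℕ) : Prop := p ∣ n ∧ ¬ p ^ 2 ∣ n

theorem periodic_exactDiv (p : ℕ) : Function.Periodic (ExactDiv p) (p ^ 2) := by
  intro n
  simp only [ExactDiv]
  rw [Nat.dvd_add_left (Dvd.intro_left p (by ring)), Nat.dvd_add_left dvd_rfl]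

/-- Exactly `p - 1` residues mod `p ^ 2` are divisible by `p` exactly once, so the remaining ones
have density `1 - (p - 1) / p ^ 2 ≤ 1 - 1 / (2 * p) ≤ exp (-1 / (2 * p))`. -/
theorem count_not_exactDiv {p : ℕ} (hp : p.Prime) :
    (Nat.count (fun n => ¬ ExactDiv p n) (p ^ 2) : ℝ)
      ≤ (p ^ 2 : ℕ) * Real.exp (-(1 / 2) * (1 / p)) := by
  have hcard : p - 1 ≤ ((Finset.range (p ^ 2)).filter (ExactDiv p)).card := by
    have : (p - 1) = (Finset.Ico 1 p).card := by simp
    rw [this]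
    refine Finset.card_le_card_of_injOn (fun j => p * j) ?_ ?_
    · intro j hj
      simp only [Finset.coe_Ico, Set.mem_Ico] at hj
      simp only [Finset.coe_filter, Finset.mem_range, Set.mem_ofPred_eq]
      refine ⟨by rw [pow_two]; exact Nat.mul_lt_mul_of_pos_left hj.2 hp.pos, Dvd.intro _ rfl, ?_⟩
      rw [pow_two, Nat.mul_dvd_mul_iff_left hp.pos]
      exact Nat.not_dvd_of_pos_of_lt hj.1 hj.2
    · intro i _ j _ hij
      exact Nat.eq_of_mul_eq_mul_left hp.pos hij
  have hsplit := Finset.card_filter_add_card_filter_not (s := Finset.range (p ^ 2)) (ExactDiv p)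
  rw [Finset.card_range] at hsplit
  rw [Nat.count_eq_card_filter_range]
  have h1 : ((Finset.range (p ^ 2)).filter fun n => ¬ ExactDiv p n).card + p ≤ p ^ 2 + 1 := by
    have := hp.pos
    omega
  have h2 : (((Finset.range (p ^ 2)).filter fun n => ¬ ExactDiv p n).card : ℝ) + p ≤ p ^ 2 + 1 := by
    exact_mod_cast h1
  have hp2 : (2 : ℝ) ≤ p := by exact_mod_cast hp.two_le
  have h3 := Real.add_one_le_exp (-(1 / 2) * (1 / (p : ℝ)))
  have h4 : ((p ^ 2 : ℕ) : ℝ) * (-(1 / 2) * (1 / p) + 1) = p ^ 2 - p / 2 := by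
    push_cast; field_simp; ring
  have h5 : ((p ^ 2 : ℕ) : ℝ) * (-(1 / 2) * (1 / p) + 1)
      ≤ (p ^ 2 : ℕ) * Real.exp (-(1 / 2) * (1 / p)) := by gcongr
  linarith

theorem periodic_forall_not_exactDiv (T : Finset ℕ) :
    Function.Periodic (fun n => ∀ p ∈ T, ¬ ExactDiv p n) (∏ p ∈ T, p ^ 2) := by
  intro n
  refine propext (forall₂_congr fun p hp => ?_)
  obtain ⟨k, hk⟩ := Finset.dvd_prod_of_mem (fun p => p ^ 2) hp
  have := (periodic_exactDiv p).nat_mul k n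
  rw [hk, mul_comm (p ^ 2) k]
  simp only [Nat.cast_id] at this
  rw [this]

theorem count_forall_not_exactDiv (T : Finset ℕ) (hT : ∀ p ∈ T, p.Prime) :
    (Nat.count (fun n => ∀ p ∈ T, ¬ ExactDiv p n) (∏ p ∈ T, p ^ 2) : ℝ)
      ≤ Real.exp (-(1 / 2) * ∑ p ∈ T, (1 : ℝ) / p) * (∏ p ∈ T, p ^ 2 : ℕ) := by
  induction T using Finset.induction_on with
  | empty => simp
  | insert p T hpT ih =>
    have hp := hT p (Finset.mem_insert_self p T)
    have hT' : ∀ r ∈ T, r.Prime := fun r hr => hT r (Finset.mem_insert_of_mem hr)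
    have hco : (p ^ 2).Coprime (∏ r ∈ T, r ^ 2) := by
      refine Nat.Coprime.prod_right fun r hr => Nat.Coprime.pow _ _ ?_
      exact (Nat.coprime_primes hp (hT' r hr)).2 fun h => hpT (h ▸ hr)
    have hper : Function.Periodic (fun n => ¬ ExactDiv p n) (p ^ 2) := fun n => by
      simp only [periodic_exactDiv p n]
    have h1 := count_and_le (pow_pos hp.pos 2)
      (Finset.prod_pos fun r hr => pow_pos (hT' r hr).pos 2) hco hper
      (periodic_forall_not_exactDiv T)
    have h2 : (fun n => ∀ r ∈ insert p T, ¬ ExactDiv r n)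
        = fun n => ¬ ExactDiv p n ∧ ∀ r ∈ T, ¬ ExactDiv r n := by
      funext n; simp
    rw [Finset.prod_insert hpT, Finset.sum_insert hpT]
    simp only [h2]
    calc _ ≤ ((Nat.count (fun n => ¬ ExactDiv p n) (p ^ 2) : ℕ) : ℝ)
          * (Nat.count (fun n => ∀ r ∈ T, ¬ ExactDiv r n) (∏ r ∈ T, r ^ 2) : ℕ) := by
          rw [← Nat.cast_mul]
          refine Nat.cast_le.2 ((le_of_eq ?_).trans (h1.trans (le_of_eq ?_))) <;> congr!
      _ ≤ ((p ^ 2 : ℕ) * Real.exp (-(1 / 2) * (1 / p)))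
          * (Real.exp (-(1 / 2) * ∑ r ∈ T, (1 : ℝ) / r) * (∏ r ∈ T, r ^ 2 : ℕ)) := by
          exact mul_le_mul (count_not_exactDiv hp) (ih hT') (by positivity) (by positivity)
      _ = _ := by
          rw [mul_add, Real.exp_add]; push_cast; ring

/-- If `p ∥ n`, then `p + 1 = σ(p)` divides `σ(n)` by multiplicativity. -/
theorem dvd_sigma1 {m p n : ℕ} (hp : p.Prime) (hm : m ∣ p + 1) (h : ExactDiv p n) :
    m ∣ sigma1 n := by
  obtain ⟨⟨k, rfl⟩, h2⟩ := h
  have hco : p.Coprime k := (Nat.Prime.coprime_iff_not_dvd hp).2 fun hk =>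
    h2 (by rw [pow_two]; exact Nat.mul_dvd_mul_left p hk)
  rw [sigma1, hco.sum_divisors_mul, hp.sum_divisors]
  exact Dvd.dvd.mul_right (by rwa [add_comm] at hm ⊢) _

/-! ### Restricted digits -/

/-- All base-`g` digits of `m` lie in `D`. There are no leading zeros in `Nat.digits`, and `0` has no
digits at all, so this holds for `m = 0` whatever `D` is. -/
def AllDigits (g : ℕ) (D : Finset ℕ) (m : ℕ) : Prop := ∀ d ∈ Nat.digits g m, d ∈ D

/-- The last `k` digits of `m` form an integer with digits in `D`: reduction mod `g ^ k` truncates the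
digit list and at most drops some zeros. -/
theorem allDigits_mod {g : ℕ} (hg : 1 < g) (D : Finset ℕ) (k : ℕ) :
    ∀ m, AllDigits g D m → AllDigits g D (m % g ^ k) := by
  induction k with
  | zero => intro m _; simp [AllDigits, Nat.mod_one]
  | succ k ih =>
    intro m hm
    rcases Nat.eq_zero_or_pos m with rfl | hpos
    · simpa using hm
    unfold AllDigits at hm
    rw [Nat.digits_def' hg hpos] at hm
    have hq : AllDigits g D (m / g) := fun d hd => hm d (List.mem_cons_of_mem _ hd)
    have h0 := hm _ List.mem_cons_self
    rw [pow_succ', Nat.mod_mul]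
    rcases Nat.eq_zero_or_pos (m % g + g * (m / g % g ^ k)) with h | h
    · rw [h]; simp [AllDigits]
    · unfold AllDigits
      rw [Nat.digits_def' hg h]
      intro d hd
      rcases List.mem_cons.1 hd with rfl | hd
      · rw [Nat.add_mul_mod_self_left, Nat.mod_mod]; exact h0
      · rw [Nat.add_mul_div_left _ _ (by omega), Nat.div_eq_of_lt (Nat.mod_lt _ (by omega)),
          zero_add] at hd
        exact ih _ hq d hd

/-- The recursion `a (k + 1) ≤ (g - 1) * a k + 1` gives `a k + 1 ≤ 2 * (g - 1) ^ k`; the induction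
step uses `2 ≤ g - 1`, that is `g ≥ 3`. -/
theorem card_allDigits_le {g : ℕ} (hg : 3 ≤ g) {D : Finset ℕ} (hD : D ⊂ Finset.range g) (k : ℕ) :
    ((Finset.range (g ^ k)).filter (AllDigits g D)).card + 1 ≤ 2 * (g - 1) ^ k := by
  have hDc : D.card ≤ g - 1 := by
    have := Finset.card_lt_card hD
    rw [Finset.card_range] at this
    omega
  induction k with
  | zero =>
    have := Finset.card_filter_le (Finset.range (g ^ 0)) (AllDigits g D)
    simp at this ⊢
    omega
  | succ k ih =>
    set A := (Finset.range (g ^ k)).filter (AllDigits g D)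
    have hsub : (Finset.range (g ^ (k + 1))).filter (AllDigits g D)
        ⊆ insert 0 ((D ×ˢ A).image fun x => x.1 + g * x.2) := by
      intro r hr
      obtain ⟨hr1, hr2⟩ := Finset.mem_filter.1 hr
      rw [Finset.mem_range, pow_succ'] at hr1
      rcases Nat.eq_zero_or_pos r with rfl | hpos
      · simp
      refine Finset.mem_insert_of_mem (Finset.mem_image.2 ⟨(r % g, r / g), ?_, Nat.mod_add_div r g⟩)
      unfold AllDigits at hr2
      rw [Nat.digits_def' (by omega) hpos] at hr2
      exact Finset.mem_product.2 ⟨hr2 _ List.mem_cons_self, Finset.mem_filter.2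
        ⟨Finset.mem_range.2 (Nat.div_lt_of_lt_mul hr1),
          fun d hd => hr2 d (List.mem_cons_of_mem _ hd)⟩⟩
    have h1 := (Finset.card_le_card hsub).trans (Finset.card_insert_le _ _)
    have h2 : ((D ×ˢ A).image fun x => x.1 + g * x.2).card ≤ (g - 1) * A.card :=
      Finset.card_image_le.trans (by rw [Finset.card_product]; gcongr)
    have h3 : (g - 1) * (A.card + 1) ≤ (g - 1) * (2 * (g - 1) ^ k) := by gcongr
    have h4 : (g - 1) * (2 * (g - 1) ^ k) = 2 * (g - 1) ^ (k + 1) := by ring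
    rw [mul_add] at h3
    omega

/-- The residue of `-n` mod `m` is represented by an element of `A`. -/
def NegIn (m : ℕ) (A : Finset ℕ) (n : ℕ) : Prop := ∃ r ∈ A, m ∣ r + n

theorem periodic_negIn (m : ℕ) (A : Finset ℕ) : Function.Periodic (NegIn m A) m := by
  intro n
  simp only [NegIn, ← add_assoc, Nat.dvd_add_self_right]

theorem count_negIn_le {m : ℕ} {A : Finset ℕ} (hA : A ⊆ Finset.range m) :
    Nat.count (NegIn m A) m ≤ A.card := by
  rw [Nat.count_eq_card_filter_range]
  refine (Finset.card_le_card (t := A.image fun r => (m - r) % m) ?_).trans Finset.card_image_le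
  intro n hn
  obtain ⟨hn, r, hr, c, hc⟩ := Finset.mem_filter.1 hn
  have hrm := Finset.mem_range.1 (hA hr)
  have hn := Finset.mem_range.1 hn
  refine Finset.mem_image.2 ⟨r, hr, ?_⟩
  have hc2 : c < 2 := by
    by_contra! h
    have := Nat.mul_le_mul_left m h
    omega
  interval_cases c
  · have : r = 0 := by omega
    have : n = 0 := by omega
    subst r n; simp
  · have : m - r = n := by omega
    rw [this, Nat.mod_eq_of_lt hn]

/-! ### Density zero -/

theorem le_sigma1 {n : ℕ} (hn : 0 < n) : n ≤ sigma1 n :=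
  Finset.single_le_sum (f := fun d => d) (fun _ _ => Nat.zero_le _)
    (Nat.mem_divisors_self n hn.ne')

/-- The dichotomy behind the theorem: either no prime of `T` divides `n` exactly once, or
`g ^ k ∣ σ(n)`, so that `s(n) ≡ -n (mod g ^ k)` and the last `k` digits of `-n` are restricted. -/
theorem exactDiv_or_negIn {g : ℕ} (hg : 1 < g) {D : Finset ℕ} {k n : ℕ} {T : Finset ℕ}
    (hT : ∀ p ∈ T, p.Prime ∧ g ^ k ∣ p + 1) (hn : 0 < n) (h : AllDigits g D (sOfN n)) :
    (∀ p ∈ T, ¬ ExactDiv p n) ∨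
      NegIn (g ^ k) ((Finset.range (g ^ k)).filter (AllDigits g D)) n := by
  by_cases hc : ∀ p ∈ T, ¬ ExactDiv p n
  · exact Or.inl hc
  right
  push Not at hc
  obtain ⟨p, hp, hpn⟩ := hc
  have hd := dvd_sigma1 (hT p hp).1 (hT p hp).2 hpn
  have hs : sOfN n + n = sigma1 n := Nat.sub_add_cancel (le_sigma1 hn)
  refine ⟨sOfN n % g ^ k, Finset.mem_filter.2 ⟨Finset.mem_range.2
    (Nat.mod_lt _ (pow_pos (by omega) k)), allDigits_mod hg D k _ h⟩, ?_⟩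
  rw [← hs] at hd
  rw [Nat.dvd_iff_mod_eq_zero] at hd ⊢
  rwa [Nat.mod_add_mod]

theorem exists_count_bound {g : ℕ} (hg : 3 ≤ g) {D : Finset ℕ} (hD : D ⊂ Finset.range g)
    {δ : ℝ} (hδ : 0 < δ) :
    ∃ K : ℝ, ∀ N : ℕ,
      (Nat.count (fun n => 0 < n ∧ AllDigits g D (sOfN n)) N : ℝ) ≤ 2 * δ * N + K := by
  have hg0 : (0 : ℝ) < g := by
    have : 0 < g := by omega
    exact_mod_cast this
  obtain ⟨k, hk⟩ : ∃ k : ℕ, (((g - 1 : ℕ) : ℝ) / g) ^ k < δ / 2 := by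
    refine exists_pow_lt_of_lt_one (by positivity) ?_
    rw [div_lt_one hg0]
    have : g - 1 < g := by omega
    exact_mod_cast this
  have hm : 0 < g ^ k := pow_pos (by omega) k
  obtain ⟨T, hT, hTsum⟩ := exists_finset_primes (g ^ k) hm (-2 * Real.log δ)
  set A := (Finset.range (g ^ k)).filter (AllDigits g D) with hA
  set Q := ∏ p ∈ T, p ^ 2 with hQ
  have hQ0 : 0 < Q := Finset.prod_pos fun p hp => pow_pos (hT p hp).1.pos 2
  have h1 : (Nat.count (fun n => ∀ p ∈ T, ¬ ExactDiv p n) Q : ℝ) ≤ δ * Q := by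
    refine (count_forall_not_exactDiv T fun p hp => (hT p hp).1).trans ?_
    gcongr
    rw [← Real.le_log_iff_exp_le hδ]
    linarith
  have h2 : (Nat.count (NegIn (g ^ k) A) (g ^ k) : ℝ) ≤ δ * (g ^ k : ℕ) := by
    have hc : Nat.count (NegIn (g ^ k) A) (g ^ k) ≤ 2 * (g - 1) ^ k :=
      (count_negIn_le (Finset.filter_subset _ _)).trans
        ((Nat.le_succ _).trans (card_allDigits_le hg hD k))
    have hc' : (Nat.count (NegIn (g ^ k) A) (g ^ k) : ℝ) ≤ 2 * ((g - 1 : ℕ) : ℝ) ^ k := by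
      exact_mod_cast hc
    rw [div_pow, div_lt_iff₀ (by positivity)] at hk
    push_cast
    linarith
  refine ⟨Q + (g ^ k : ℕ), fun N => ?_⟩
  have b1 := count_le_of_periodic hQ0 (periodic_forall_not_exactDiv T)
    (δ := δ) (by convert h1) N
  have b2 := count_le_of_periodic hm (periodic_negIn (g ^ k) A) h2 N
  have hle : Nat.count (fun n => 0 < n ∧ AllDigits g D (sOfN n)) N
      ≤ Nat.count (fun n => ∀ p ∈ T, ¬ ExactDiv p n) N + Nat.count (NegIn (g ^ k) A) N := by
    simp only [Nat.count_eq_card_filter_range]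
    refine (Finset.card_le_card fun n hn => ?_).trans (Finset.card_union_le _ _)
    obtain ⟨hnN, hn0, hn⟩ := Finset.mem_filter.1 hn
    rcases exactDiv_or_negIn (by omega) hT hn0 hn with h | h
    · exact Finset.mem_union_left _ (Finset.mem_filter.2 ⟨hnN, h⟩)
    · exact Finset.mem_union_right _ (Finset.mem_filter.2 ⟨hnN, h⟩)
  have hle' : (Nat.count (fun n => 0 < n ∧ AllDigits g D (sOfN n)) N : ℝ)
      ≤ (Nat.count (fun n => ∀ p ∈ T, ¬ ExactDiv p n) N : ℝ)
        + (Nat.count (NegIn (g ^ k) A) N : ℝ) := by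
    rw [← Nat.cast_add]
    refine Nat.cast_le.2 (hle.trans (le_of_eq ?_))
    congr!
  have b1' : (Nat.count (fun n => ∀ p ∈ T, ¬ ExactDiv p n) N : ℝ) ≤ δ * N + Q := by
    refine (le_of_eq ?_).trans b1
    congr!
  linarith

end

/-- For a base `g ≥ 3` and a nonempty proper subset `D ⊊ {0,…,g-1}`,
the preimage under `s` of the set of integers with all base-`g` digits in `D`
has asymptotic density zero. -/
theorem stmt1 (g : ℕ) (hg : 3 ≤ g)
    (D : Finset ℕ) (hD : D.Nonempty) (hDsub : D ⊂ Finset.range g) :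
    Tendsto (fun x : ℝ =>
      ({n : ℕ | 0 < n ∧ (n : ℝ) ≤ x ∧
          ∀ d ∈ Nat.digits g (sOfN n), d ∈ D}.ncard : ℝ) / x)
      atTop (nhds 0) := by
  classical
  rw [Metric.tendsto_atTop]
  intro ε hε
  obtain ⟨K, hK⟩ := exists_count_bound hg hDsub (δ := ε / 4) (by positivity)
  refine ⟨max 1 (2 / ε * (ε / 2 + K) + 1), fun x hx => ?_⟩
  have hx1 : 1 ≤ x := (le_max_left _ _).trans hx
  have hx2 : 2 / ε * (ε / 2 + K) < x := by linarith [(le_max_right _ _).trans hx]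
  have hx0 : 0 < x := by linarith
  have hcard : {n : ℕ | 0 < n ∧ (n : ℝ) ≤ x ∧ ∀ d ∈ Nat.digits g (sOfN n), d ∈ D}.ncard
      ≤ Nat.count (fun n => 0 < n ∧ AllDigits g D (sOfN n)) (⌊x⌋₊ + 1) := by
    rw [Nat.count_eq_card_filter_range, ← Set.ncard_coe_finset]
    refine Set.ncard_le_ncard (fun n hn => ?_) (Finset.finite_toSet _)
    exact Finset.mem_coe.2 (Finset.mem_filter.2 ⟨Finset.mem_range.2
      (Nat.lt_succ_of_le (Nat.le_floor hn.2.1)), hn.1, hn.2.2⟩)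
  have hb := hK (⌊x⌋₊ + 1)
  have hfl := Nat.floor_le hx0.le
  rw [Real.dist_eq, sub_zero, abs_of_nonneg (by positivity), div_lt_iff₀ hx0]
  have hcard' : ({n : ℕ | 0 < n ∧ (n : ℝ) ≤ x ∧ ∀ d ∈ Nat.digits g (sOfN n), d ∈ D}.ncard : ℝ)
      ≤ 2 * (ε / 4) * (⌊x⌋₊ + 1 : ℕ) + K := by
    refine le_trans ?_ hb
    refine Nat.cast_le.2 (hcard.trans (le_of_eq ?_))
    congr!
  push_cast at hcard'
  have h3 : ε / 2 + K < ε / 2 * x := by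
    have := mul_lt_mul_of_pos_left hx2 (show 0 < ε / 2 by positivity)
    have e : ε / 2 * (2 / ε * (ε / 2 + K)) = ε / 2 + K := by field_simp
    rwa [e] at this
  have h4 : 2 * (ε / 4) * (⌊x⌋₊ + 1 : ℝ) ≤ ε / 2 * (x + 1) := by
    have : (⌊x⌋₊ + 1 : ℝ) ≤ x + 1 := by linarith
    have := mul_le_mul_of_nonneg_left this (show 0 ≤ ε / 2 by positivity)
    linarith
  linarith
end

section
/- Let $g \geq 3$ be an integer, and let $\gamma, \delta \in (0,1)$ and $A > 0$ be given. Then there exist a constant $C > 0$ and a threshold $x_0$ (depending only on $g, A, \gamma, \delta$) such that for all $x \geq x_0$ and all integers $k$ satisfying $5 \log\log\log x \leq k \leq A (\log\log x)^{\gamma}$, the number of positive integers $n \leq x$ with $g^k \nmid \sigma(n)$ is at most $C \, x \exp\big(-(\log\log x)^{\delta}\big)$. -/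
/-! ### The weight and divisibility of `σ(n)` -/

/-- The primes of the finite set `S` that divide `n` exactly once. For `n = 0` it is empty. -/
def exactPrimes (S : Finset ℕ) (n : ℕ) : Finset ℕ :=
  S.filter fun p => p ∣ n ∧ ¬ p ^ 2 ∣ n

/-- The weight `2 ^ (-ω)`, where `ω` counts the primes of `S` dividing `n`
exactly once. -/
noncomputable def weight (S : Finset ℕ) (n : ℕ) : ℝ := (1 / 2) ^ (exactPrimes S n).card

lemma weight_pos (S : Finset ℕ) (n : ℕ) : 0 < weight S n := by
  unfold weight; positivity

lemma weight_le_one (S : Finset ℕ) (n : ℕ) : weight S n ≤ 1 :=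
  pow_le_one₀ (by norm_num) (by norm_num)

/-- Each prime `p ≡ -1 mod g` with `p ∥ n` contributes a factor `σ(p) = p + 1` to `σ(n)`. -/
lemma pow_dvd_sigma1 {g : ℕ} {S : Finset ℕ} (hS : ∀ p ∈ S, p.Prime ∧ g ∣ p + 1) {n k : ℕ}
    (hn : n ≠ 0) (hk : k ≤ (exactPrimes S n).card) : g ^ k ∣ sigma1 n := by
  have hsub : exactPrimes S n ⊆ n.primeFactors := fun p hp => by
    simp only [exactPrimes, Finset.mem_filter] at hp
    exact Nat.mem_primeFactors.2 ⟨(hS p hp.1).1, hp.2.1, hn⟩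
  rw [sigma1, Nat.sum_divisors hn]
  refine (pow_dvd_pow g hk).trans (dvd_trans ?_ (Finset.prod_dvd_prod_of_subset _ _ _ hsub))
  rw [← Finset.prod_const]
  refine Finset.prod_dvd_prod_of_dvd _ _ fun p hp => ?_
  simp only [exactPrimes, Finset.mem_filter] at hp
  obtain ⟨hpS, hpn, hpn2⟩ := hp
  have hp := (hS p hpS).1
  have h1 : n.factorization p = 1 := by
    have h1 := (hp.dvd_iff_one_le_factorization hn).1 hpn
    have h2 := mt (hp.pow_dvd_iff_le_factorization hn).2 hpn2
    omega
  rw [h1]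
  simpa [Finset.sum_range_succ, add_comm] using (hS p hpS).2

/-- Multiplying by a power of `p` changes exact divisibility only at `p`, so the exponent in the
weight drops by at most one. -/
lemma weight_mul_le {S : Finset ℕ} (hS : ∀ p ∈ S, p.Prime) {d m : ℕ} (hd : IsPrimePow d) :
    weight S (d * m) ≤ 2 * weight S m := by
  obtain ⟨p, k, hp, -, rfl⟩ := (isPrimePow_nat_iff d).1 hd
  have hsub : exactPrimes S m ⊆ insert p (exactPrimes S (p ^ k * m)) := fun q hq => by
    simp only [exactPrimes, Finset.mem_filter, Finset.mem_insert] at hq ⊢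
    by_cases hqp : q = p
    · exact Or.inl hqp
    · refine Or.inr ⟨hq.1, hq.2.1.mul_left _, fun h => hq.2.2 ?_⟩
      exact (Nat.Coprime.pow 2 k ((Nat.coprime_primes (hS q hq.1) hp).2 hqp)).dvd_of_dvd_mul_left h
  have hcard := (Finset.card_le_card hsub).trans (Finset.card_insert_le _ _)
  have := pow_le_pow_of_le_one (by norm_num : (0 : ℝ) ≤ 1 / 2) (by norm_num) hcard
  rw [pow_succ] at this
  unfold weight
  linarith

/-! ### Mean values of the weight -/

open ArithmeticFunction in
/-- The Hall–Tenenbaum mean value inequality for the weight. Write `log x = log n + log (x / n)`;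
the first term is expanded through `log = Λ * 1` and bounded by Chebyshev's `ψ(y) ≪ y`, the second
one is at most `x / n`. -/
lemma log_mul_sum_weight_le {S : Finset ℕ} (hS : ∀ p ∈ S, p.Prime) {x : ℝ} (hx : 1 ≤ x) :
    Real.log x * ∑ n ∈ Finset.Ioc 0 ⌊x⌋₊, weight S n ≤
      (2 * (Real.log 4 + 4) + 1) * x * ∑ n ∈ Finset.Ioc 0 ⌊x⌋₊, weight S n / n := by
  let W : ArithmeticFunction ℝ := ⟨fun n => if n = 0 then 0 else weight S n, by simp⟩
  have hW : ∀ n, n ≠ 0 → W n = weight S n := fun n hn => if_neg hn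
  have hx0 : 0 ≤ x := by linarith
  have h1 : ∀ n ∈ Finset.Ioc 0 ⌊x⌋₊, weight S n * Real.log n ≤ 2 * (W * Λ) n := by
    intro n hn
    have hn0 : n ≠ 0 := (Finset.mem_Ioc.1 hn).1.ne'
    rw [← vonMangoldt_sum, mul_comm W, mul_apply,
      Nat.sum_divisorsAntidiagonal (fun d m => Λ d * W m), Finset.mul_sum, Finset.mul_sum]
    refine Finset.sum_le_sum fun d hd => ?_
    obtain ⟨⟨m, rfl⟩, -⟩ := Nat.mem_divisors.1 hd
    have hd0 : d ≠ 0 := left_ne_zero_of_mul hn0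
    have hm0 : m ≠ 0 := right_ne_zero_of_mul hn0
    rw [Nat.mul_div_cancel_left _ (Nat.pos_of_ne_zero hd0), hW m hm0]
    by_cases hpp : IsPrimePow d
    · have := mul_le_mul_of_nonneg_left (weight_mul_le hS (m := m) hpp)
        (vonMangoldt_nonneg (n := d))
      linarith
    · rw [vonMangoldt_eq_zero_iff.2 hpp]; simp
  have h2 : ∑ n ∈ Finset.Ioc 0 ⌊x⌋₊, (W * Λ) n ≤
      (Real.log 4 + 4) * x * ∑ n ∈ Finset.Ioc 0 ⌊x⌋₊, weight S n / n := by
    rw [sum_Ioc_mul_eq_sum_sum, Finset.mul_sum]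
    refine Finset.sum_le_sum fun m hm => ?_
    have hm0 := (Finset.mem_Ioc.1 hm).1
    have hψ := Chebyshev.psi_le_const_mul_self (x := x / m) (by positivity)
    rw [Chebyshev.psi, Nat.floor_div_natCast] at hψ
    rw [hW m hm0.ne']
    calc _ ≤ weight S m * ((Real.log 4 + 4) * (x / m)) :=
          mul_le_mul_of_nonneg_left hψ (weight_pos S m).le
      _ = _ := by ring
  have h3 : ∀ n ∈ Finset.Ioc 0 ⌊x⌋₊,
      Real.log x * weight S n ≤ weight S n * Real.log n + x * (weight S n / n) := by
    intro n hn
    have hn0 : (0 : ℝ) < n := by exact_mod_cast (Finset.mem_Ioc.1 hn).1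
    have hlog := Real.log_le_self (x := x / n) (by positivity)
    rw [Real.log_div (by positivity) hn0.ne'] at hlog
    have := mul_le_mul_of_nonneg_left hlog (weight_pos S n).le
    have e : x * (weight S n / n) = weight S n * (x / n) := by ring
    rw [e]; linarith
  have h4 := Finset.sum_le_sum h3
  have h5 := Finset.sum_le_sum h1
  rw [← Finset.mul_sum] at h5
  rw [Finset.sum_add_distrib, ← Finset.mul_sum, ← Finset.mul_sum] at h4
  linarith

/-! ### The Dirichlet series of the weight -/

lemma weight_prime_mul {S : Finset ℕ} (hS : ∀ p ∈ S, p.Prime) {p : ℕ} (hp : p.Prime)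
    (hpS : p ∉ S) (m : ℕ) : weight S (p * m) = weight S m := by
  have : exactPrimes S (p * m) = exactPrimes S m := by
    refine Finset.filter_congr fun q hq => ?_
    have hc : q.Coprime p := (Nat.coprime_primes (hS q hq) hp).2 (by rintro rfl; exact hpS hq)
    rw [hc.dvd_mul_left, (Nat.Coprime.pow_left 2 hc).dvd_mul_left]
  rw [weight, this, weight]

lemma summable_weight (S : Finset ℕ) {s : ℝ} (hs : 1 < s) :
    Summable fun n : ℕ => weight S n / (n : ℝ) ^ s := by
  refine Summable.of_nonneg_of_le (fun n => by have := weight_pos S n; positivity) (fun n => ?_)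
    (Real.summable_one_div_nat_rpow.2 hs)
  have := weight_le_one S n
  gcongr

/-- A prime `p ∉ S` is invisible to the weight, so restricting the Dirichlet series to multiples
of `p ^ r` multiplies it by `p ^ (-r s)`. -/
lemma tsum_dvd_weight {S : Finset ℕ} (hS : ∀ p ∈ S, p.Prime) {p : ℕ} (hp : p.Prime)
    (hpS : p ∉ S) (s : ℝ) (r : ℕ) :
    ∑' n : ℕ, (if p ^ r ∣ n then weight S n / (n : ℝ) ^ s else 0) =
      (1 / (p : ℝ) ^ s) ^ r * ∑' n : ℕ, weight S n / (n : ℝ) ^ s := by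
  have hw : ∀ r m, weight S (p ^ r * m) = weight S m := by
    intro r m
    induction r with
    | zero => simp
    | succ r ih => rw [pow_succ', mul_assoc, weight_prime_mul hS hp hpS, ih]
  have hinj : Function.Injective fun m : ℕ => p ^ r * m :=
    fun a b h => Nat.eq_of_mul_eq_mul_left (pow_pos hp.pos r) h
  rw [← hinj.tsum_eq, ← tsum_mul_left]
  · refine tsum_congr fun m => ?_
    simp only [dvd_mul_right, if_true, hw]
    push_cast
    rw [Real.mul_rpow (by positivity) (by positivity), ← Real.rpow_natCast_mul (by positivity),
      mul_comm (r : ℝ), Real.rpow_mul_natCast (by positivity), one_div_pow]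
    field_simp
  · intro n hn
    have : p ^ r ∣ n := by
      by_contra h
      simp [h] at hn
    obtain ⟨m, rfl⟩ := this
    exact ⟨m, rfl⟩

/-- Adjoining `p` to `S` halves the terms with `p ∥ n`, which make up the proportion
`p ^ (-s) - p ^ (-2 s)` of the Dirichlet series. -/
lemma tsum_weight_insert {S : Finset ℕ} (hS : ∀ p ∈ S, p.Prime) {p : ℕ} (hp : p.Prime)
    (hpS : p ∉ S) {s : ℝ} (hs : 1 < s) :
    ∑' n : ℕ, weight (insert p S) n / (n : ℝ) ^ s =
      (1 - 1 / 2 * (1 / (p : ℝ) ^ s) * (1 - 1 / (p : ℝ) ^ s)) *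
        ∑' n : ℕ, weight S n / (n : ℝ) ^ s := by
  have hsum := summable_weight S hs
  have hsummable : ∀ r, Summable fun n : ℕ =>
      (if p ^ r ∣ n then weight S n / (n : ℝ) ^ s else 0) := fun r => by
    refine Summable.of_nonneg_of_le (fun n => ?_) (fun n => ?_) hsum
    all_goals
      have := weight_pos S n
      split_ifs <;> first | positivity | exact le_rfl
  have key : ∀ n : ℕ, weight (insert p S) n / (n : ℝ) ^ s = weight S n / (n : ℝ) ^ s -
      1 / 2 * ((if p ^ 1 ∣ n then weight S n / (n : ℝ) ^ s else 0) -
        (if p ^ 2 ∣ n then weight S n / (n : ℝ) ^ s else 0)) := by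
    intro n
    have hnot : p ∉ exactPrimes S n := fun h => hpS (Finset.mem_filter.1 h).1
    by_cases h2 : p ^ 2 ∣ n
    · have h1 : p ∣ n := (dvd_pow_self p two_ne_zero).trans h2
      simp [weight, exactPrimes, Finset.filter_insert, h1, h2]
    · by_cases h1 : p ∣ n
      · have : exactPrimes (insert p S) n = insert p (exactPrimes S n) := by
          simp [exactPrimes, Finset.filter_insert, h1, h2]
        rw [if_pos (by simpa using h1), if_neg h2, weight, this,
          Finset.card_insert_of_notMem hnot, pow_succ, weight]
        ring
      · simp [weight, exactPrimes, Finset.filter_insert, h1, h2]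
  simp_rw [key]
  rw [Summable.tsum_sub hsum (((hsummable 1).sub (hsummable 2)).mul_left _), tsum_mul_left,
    Summable.tsum_sub (hsummable 1) (hsummable 2), tsum_dvd_weight hS hp hpS,
    tsum_dvd_weight hS hp hpS]
  ring

lemma tsum_weight_le (S : Finset ℕ) (hS : ∀ p ∈ S, p.Prime) {s : ℝ} (hs : 1 < s) :
    ∑' n : ℕ, weight S n / (n : ℝ) ^ s ≤
      (∑' n : ℕ, 1 / (n : ℝ) ^ s) * Real.exp (-(1 / 4) * ∑ p ∈ S, 1 / (p : ℝ) ^ s) := by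
  induction S using Finset.induction_on with
  | empty => simp [weight, exactPrimes]
  | insert p S hpS ih =>
    have hp := hS p (Finset.mem_insert_self _ _)
    have hS' : ∀ q ∈ S, q.Prime := fun q hq => hS q (Finset.mem_insert_of_mem hq)
    rw [tsum_weight_insert hS' hp hpS hs, Finset.sum_insert hpS, mul_add, Real.exp_add]
    set u : ℝ := 1 / (p : ℝ) ^ s
    have hu0 : 0 ≤ u := by positivity
    have hu : u ≤ 1 / 2 := by
      have h2 : (2 : ℝ) ≤ p := by exact_mod_cast hp.two_le
      refine one_div_le_one_div_of_le two_pos (h2.trans ?_)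
      exact Real.self_le_rpow_of_one_le (by linarith) hs.le
    have hexp : 1 - 1 / 2 * u * (1 - u) ≤ Real.exp (-(1 / 4) * u) := by
      have := Real.add_one_le_exp (-(1 / 4) * u)
      nlinarith
    calc _ ≤ Real.exp (-(1 / 4) * u) * ((∑' n : ℕ, 1 / (n : ℝ) ^ s) *
          Real.exp (-(1 / 4) * ∑ p ∈ S, 1 / (p : ℝ) ^ s)) := by
          refine mul_le_mul hexp (ih hS') ?_ (Real.exp_nonneg _)
          exact tsum_nonneg fun n => by have := weight_pos S n; positivity
      _ = _ := by ring

/-! ### Primes congruent to `-1` modulo `g` -/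

open ArithmeticFunction vonMangoldt in
/-- Quantitative Dirichlet theorem: `∑ log p / p ^ s ≥ c / (s - 1) - C` over the primes
`p ≡ -1 mod g`. Mathlib proves this for `Λ`; the proper prime powers contribute `O(1)`. -/
lemma exists_sum_log_lower (g : ℕ) (hg : 3 ≤ g) :
    ∃ c > (0 : ℝ), ∃ C : ℝ, ∀ s ∈ Set.Ioc (1 : ℝ) 2,
      Summable (fun n : ℕ => (if n.Prime then residueClass (-1 : ZMod g) n else 0) / (n : ℝ) ^ s) ∧
      c / (s - 1) - C ≤
        ∑' n : ℕ, (if n.Prime then residueClass (-1 : ZMod g) n else 0) / (n : ℝ) ^ s := by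
  have : NeZero g := ⟨by omega⟩
  obtain ⟨C, hC⟩ := LSeries_residueClass_lower_bound (q := g) (a := -1) isUnit_one.neg
  have hnp := summable_residueClass_non_primes_div (q := g) (-1)
  refine ⟨(g.totient : ℝ)⁻¹, by have := Nat.totient_pos.2 (show 0 < g by omega); positivity,
    C + ∑' n : ℕ, (if n.Prime then 0 else residueClass (-1 : ZMod g) n) / n, fun s hs => ?_⟩
  have hall : Summable fun n : ℕ => residueClass (-1 : ZMod g) n / (n : ℝ) ^ s :=
    LSeries.summable_real_of_abscissaOfAbsConv_lt <|
      (abscissaOfAbsConv_residueClass_le_one _).trans_lt <| mod_cast hs.1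
  have hsp : Summable fun n : ℕ =>
      (if n.Prime then residueClass (-1 : ZMod g) n else 0) / (n : ℝ) ^ s := by
    refine Summable.of_nonneg_of_le (fun n => ?_) (fun n => ?_) hall
    all_goals
      have := residueClass_nonneg (-1 : ZMod g) n
      split_ifs <;> first | positivity | exact le_rfl | (rw [zero_div]; positivity)
  refine ⟨hsp, ?_⟩
  have hle : ∀ n : ℕ, residueClass (-1 : ZMod g) n / (n : ℝ) ^ s ≤
      (if n.Prime then residueClass (-1 : ZMod g) n else 0) / (n : ℝ) ^ s +
        (if n.Prime then 0 else residueClass (-1 : ZMod g) n) / n := by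
    intro n
    have h0 := residueClass_nonneg (-1 : ZMod g) n
    split_ifs with h
    · simp
    · rw [zero_div, zero_add]
      rcases n.eq_zero_or_pos with rfl | hn
      · simp
      · have h1 : (1 : ℝ) ≤ n := by exact_mod_cast hn
        exact div_le_div_of_nonneg_left h0 (by linarith) (Real.self_le_rpow_of_one_le h1 hs.1.le)
  have := hall.tsum_le_tsum hle (hsp.add hnp)
  rw [hsp.tsum_add hnp] at this
  linarith [hC hs]

/-- The tangent inequality for the convex function `s ↦ n ^ (-s)` at the point `t`. -/
lemma one_div_rpow_sub_ge {n : ℕ} (hn : 0 < n) (s t : ℝ) :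
    (t - s) * (Real.log n / (n : ℝ) ^ t) ≤ 1 / (n : ℝ) ^ s - 1 / (n : ℝ) ^ t := by
  have hn' : (0 : ℝ) < n := by exact_mod_cast hn
  have hpos : 0 < (n : ℝ) ^ t := by positivity
  have h1 : (n : ℝ) ^ t / (n : ℝ) ^ s = Real.exp ((t - s) * Real.log n) := by
    rw [← Real.rpow_sub hn', Real.rpow_def_of_pos hn', mul_comm]
  have h2 := Real.add_one_le_exp ((t - s) * Real.log n)
  rw [← h1] at h2
  have h3 := mul_le_mul_of_nonneg_left h2 (one_div_pos.2 hpos).le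
  have e1 : 1 / (n : ℝ) ^ t * ((n : ℝ) ^ t / (n : ℝ) ^ s) = 1 / (n : ℝ) ^ s := by field_simp
  rw [e1] at h3
  have e2 : 1 / (n : ℝ) ^ t * ((t - s) * Real.log n + 1) =
    (t - s) * (Real.log n / (n : ℝ) ^ t) + 1 / (n : ℝ) ^ t := by ring
  linarith

open ArithmeticFunction vonMangoldt in
/-- `∑ p ^ (-s) ≥ c log (1 / (s - 1)) - C` over the primes `p ≡ -1 mod g`, for `s = 1 + 2 ^ (-j)`
and with a finite set of primes. Each halving of `s - 1` increases the sum by a constant, up to an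
error that is summable in `j`. -/
lemma exists_primes_sum_ge (g : ℕ) (hg : 3 ≤ g) :
    ∃ c > (0 : ℝ), ∃ C : ℝ, ∀ j : ℕ, ∃ S : Finset ℕ, (∀ p ∈ S, p.Prime ∧ g ∣ p + 1) ∧
      c * j - C ≤ ∑ p ∈ S, 1 / (p : ℝ) ^ (1 + 1 / (2 : ℝ) ^ j) := by
  classical
  obtain ⟨c, hc, C, hC⟩ := exists_sum_log_lower g hg
  set σ : ℕ → ℝ := fun j => 1 + 1 / (2 : ℝ) ^ j with hσ
  have hσ1 : ∀ j, 1 < σ j := fun j => by simp [hσ]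
  have hσ2 : ∀ j, σ j ≤ 2 := fun j => by
    have : 1 / (2 : ℝ) ^ j ≤ 1 := by
      rw [div_le_one (by positivity)]; exact one_le_pow₀ (by norm_num)
    simp only [hσ]; linarith
  let a : ℕ → ℝ := fun n => if n.Prime ∧ (n : ZMod g) = -1 then 1 else 0
  have ha0 : ∀ n, 0 ≤ a n := fun n => by simp only [a]; split_ifs <;> norm_num
  have hsum : ∀ j, Summable fun n : ℕ => a n / (n : ℝ) ^ σ j := fun j => by
    refine Summable.of_nonneg_of_le (fun n => by have := ha0 n; positivity) (fun n => ?_)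
      (Real.summable_one_div_nat_rpow.2 (hσ1 j))
    have : a n ≤ 1 := by simp only [a]; split_ifs <;> norm_num
    gcongr
  have hstep : ∀ j, c / 2 - C * (1 / 2 ^ (j + 1)) + ∑' n : ℕ, a n / (n : ℝ) ^ σ j ≤
      ∑' n : ℕ, a n / (n : ℝ) ^ σ (j + 1) := by
    intro j
    obtain ⟨hs, hl⟩ := hC (σ j) ⟨hσ1 j, hσ2 j⟩
    have hd : σ j - σ (j + 1) = 1 / 2 ^ (j + 1) := by
      simp only [hσ, pow_succ]; field_simp; ring
    have hle : ∀ n : ℕ, (1 / 2 ^ (j + 1) : ℝ) *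
        ((if n.Prime then residueClass (-1 : ZMod g) n else 0) / (n : ℝ) ^ σ j) +
          a n / (n : ℝ) ^ σ j ≤ a n / (n : ℝ) ^ σ (j + 1) := by
      intro n
      by_cases hp : n.Prime
      · by_cases hr : (n : ZMod g) = -1
        · have := one_div_rpow_sub_ge hp.pos (σ (j + 1)) (σ j)
          simp only [a, hp, hr, if_true, and_self, residueClass, Set.indicator, Set.mem_ofPred_eq,
            vonMangoldt_apply_prime hp]
          rw [hd] at this
          linarith
        · simp [a, hp, hr]
      · simp [a, hp]
    have h := ((hs.mul_left _).add (hsum j)).tsum_le_tsum hle (hsum (j + 1))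
    rw [(hs.mul_left _).tsum_add (hsum j), tsum_mul_left] at h
    have h2 := mul_le_mul_of_nonneg_left hl (show (0 : ℝ) ≤ 1 / 2 ^ (j + 1) by positivity)
    have e : (1 / 2 ^ (j + 1) : ℝ) * (c / (σ j - 1) - C) = c / 2 - C * (1 / 2 ^ (j + 1)) := by
      simp only [hσ, pow_succ]; field_simp; ring
    linarith
  have hind : ∀ j : ℕ, c / 2 * j - C * (1 - 1 / 2 ^ j) ≤ ∑' n : ℕ, a n / (n : ℝ) ^ σ j := by
    intro j
    induction j with
    | zero => simpa using tsum_nonneg fun n : ℕ => by have := ha0 n; positivity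
    | succ j ih =>
      have h := hstep j
      have e : (1 / 2 ^ j : ℝ) = 2 * (1 / 2 ^ (j + 1)) := by rw [pow_succ]; field_simp
      rw [e] at ih
      push_cast
      linarith
  refine ⟨c / 2, by positivity, |C| + 1, fun j => ?_⟩
  have hlt : c / 2 * j - (|C| + 1) < ∑' n : ℕ, a n / (n : ℝ) ^ σ j := by
    have h0 : (0 : ℝ) ≤ 1 - 1 / 2 ^ j := by
      have := hσ2 j; simp only [hσ] at this; linarith
    have h1 : (1 : ℝ) - 1 / 2 ^ j ≤ 1 := by
      have : (0 : ℝ) ≤ 1 / 2 ^ j := by positivity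
      linarith
    have h2 : C * (1 - 1 / 2 ^ j) ≤ |C| * 1 :=
      mul_le_mul (le_abs_self C) h1 h0 (abs_nonneg C)
    linarith [hind j]
  obtain ⟨T, hT⟩ := ((hsum j).hasSum.eventually (lt_mem_nhds hlt)).exists
  refine ⟨T.filter fun n => n.Prime ∧ (n : ZMod g) = -1, fun p hp => ?_, ?_⟩
  · obtain ⟨-, hp, hr⟩ := Finset.mem_filter.1 hp
    refine ⟨hp, (ZMod.natCast_eq_zero_iff _ _).1 ?_⟩
    rw [Nat.cast_add, hr]; simp
  · rw [Finset.sum_filter]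
    refine hT.le.trans (Finset.sum_le_sum fun n _ => ?_)
    simp only [a]
    split_ifs <;> simp [hσ]

/-! ### Conclusion -/

/-- `ζ(s) ≪ 1 / (s - 1)` along `s = 1 + 2 ^ (-j)`. -/
lemma exists_zeta_le : ∃ Z > (0 : ℝ), ∀ j : ℕ,
    ∑' n : ℕ, 1 / (n : ℝ) ^ (1 + 1 / (2 : ℝ) ^ j) ≤ Z * 2 ^ j := by
  have ht : Filter.Tendsto (fun j : ℕ => 1 + 1 / (2 : ℝ) ^ j) Filter.atTop
      (nhdsWithin 1 (Set.Ioi 1)) := by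
    refine tendsto_nhdsWithin_iff.2 ⟨?_, Filter.Eventually.of_forall fun j => by simp⟩
    have := tendsto_pow_atTop_nhds_zero_of_lt_one (r := (1 / 2 : ℝ)) (by norm_num) (by norm_num)
    simpa using this.const_add 1
  obtain ⟨Z, hZ⟩ := (tendsto_sub_mul_tsum_nat_rpow.comp ht).bddAbove_range
  refine ⟨max Z 1, by positivity, fun j => ?_⟩
  have h := (hZ ⟨j, rfl⟩).trans (le_max_left Z 1)
  simp only [Function.comp, add_sub_cancel_left] at h
  rw [one_div_mul_eq_div, div_le_iff₀ (by positivity)] at h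
  exact h

/-- The mean value of the weight up to `x` is `≪ (log x) ^ (-c)`. -/
lemma exists_sum_weight_le (g : ℕ) (hg : 3 ≤ g) :
    ∃ K > (0 : ℝ), ∃ c > (0 : ℝ), ∀ x : ℝ, 1 ≤ x → 1 ≤ Real.log x →
      ∃ S : Finset ℕ, (∀ p ∈ S, p.Prime ∧ g ∣ p + 1) ∧
        ∑ n ∈ Finset.Ioc 0 ⌊x⌋₊, weight S n ≤ K * x * Real.exp (-c * Real.log (Real.log x)) := by
  obtain ⟨c, hc, C, hcC⟩ := exists_primes_sum_ge g hg
  obtain ⟨Z, hZ, hζ⟩ := exists_zeta_le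
  have hlog4 : 0 < Real.log 4 := Real.log_pos (by norm_num)
  refine ⟨(2 * (Real.log 4 + 4) + 1) * (Real.exp 2 * Z * Real.exp ((c + C) / 4)),
    by positivity, c / 4, by positivity, fun x hx1 hx => ?_⟩
  have hx0 : 0 < x := by linarith
  -- `s - 1 = 2 ^ (-j)` has the order of `1 / log x`, so `n ^ (s - 1)` is bounded for `n ≤ x`.
  obtain ⟨j, hj1, hj2⟩ := exists_nat_pow_near hx (one_lt_two)
  obtain ⟨S, hS, hsum⟩ := hcC j
  refine ⟨S, hS, ?_⟩
  have hSp : ∀ p ∈ S, p.Prime := fun p hp => (hS p hp).1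
  set s : ℝ := 1 + 1 / (2 : ℝ) ^ j with hs
  have hs1 : 1 < s := by simp [hs]
  have hjL : Real.log (Real.log x) - 1 ≤ j := by
    have h := Real.log_le_log (by linarith) hj2.le
    rw [Real.log_pow] at h
    have := Real.log_two_lt_d9
    have hl0 := Real.log_pos one_lt_two
    push_cast at h
    nlinarith
  have hn : ∀ n ∈ Finset.Ioc 0 ⌊x⌋₊,
      weight S n / (n : ℝ) ≤ Real.exp 2 * (weight S n / (n : ℝ) ^ s) := by
    intro n hn
    obtain ⟨hn0, hnx⟩ := Finset.mem_Ioc.1 hn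
    have hn0' : (0 : ℝ) < n := by exact_mod_cast hn0
    have hnx' : (n : ℝ) ≤ x := (Nat.le_floor_iff hx0.le).1 hnx
    have h2 : (n : ℝ) ^ s ≤ Real.exp 2 * n := by
      rw [hs, Real.rpow_add hn0', Real.rpow_one, mul_comm]
      refine mul_le_mul_of_nonneg_right ?_ hn0'.le
      rw [Real.rpow_def_of_pos hn0']
      refine Real.exp_le_exp.2 ?_
      rw [mul_one_div, div_le_iff₀ (by positivity)]
      rw [pow_succ] at hj2
      linarith [Real.log_le_log hn0' hnx']
    rw [mul_div_assoc', div_le_div_iff₀ hn0' (by positivity)]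
    nlinarith [weight_pos S n]
  have h1 : ∑ n ∈ Finset.Ioc 0 ⌊x⌋₊, weight S n / n ≤
      Real.log x * (Real.exp 2 * Z * Real.exp ((c + C) / 4) *
        Real.exp (-(c / 4) * Real.log (Real.log x))) := by
    calc _ ≤ Real.exp 2 * ∑ n ∈ Finset.Ioc 0 ⌊x⌋₊, weight S n / (n : ℝ) ^ s := by
          rw [Finset.mul_sum]; exact Finset.sum_le_sum hn
      _ ≤ Real.exp 2 * ∑' n : ℕ, weight S n / (n : ℝ) ^ s := by
          gcongr
          exact (summable_weight S hs1).sum_le_tsum _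
            fun n _ => by have := weight_pos S n; positivity
      _ ≤ Real.exp 2 * ((Z * 2 ^ j) * Real.exp (-(1 / 4) * (c * j - C))) := by
          gcongr
          refine (tsum_weight_le S hSp hs1).trans ?_
          have := hζ j
          refine mul_le_mul this (Real.exp_le_exp.2 ?_) (Real.exp_nonneg _) (by positivity)
          linarith
      _ ≤ Real.exp 2 * ((Z * Real.log x) * Real.exp ((c + C) / 4 +
            -(c / 4) * Real.log (Real.log x))) := by
          gcongr
          nlinarith
      _ = _ := by rw [Real.exp_add]; ring
  have h2 := log_mul_sum_weight_le hSp hx1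
  have h3 := mul_le_mul_of_nonneg_left h1
    (show 0 ≤ (2 * (Real.log 4 + 4) + 1) * x by positivity)
  refine le_of_mul_le_mul_left ((h2.trans h3).trans_eq ?_) (by linarith : 0 < Real.log x)
  ring

/-- key lemma: For `g ≥ 3`, `γ, δ ∈ (0,1)`, `A > 0`, uniformly for
integers `k ∈ [5 log₃ x, A (log₂ x)^γ]`, the number of `n ≤ x` with `g^k ∤ σ(n)`
is `O(x·exp(-(log₂ x)^δ))`. -/
theorem stmt2 (g : ℕ) (hg : 3 ≤ g) (γ δ : ℝ) (hγ : γ ∈ Set.Ioo (0 : ℝ) 1)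
    (hδ : δ ∈ Set.Ioo (0 : ℝ) 1) (A : ℝ) (hA : 0 < A) :
    ∃ C > (0 : ℝ), ∃ x₀ : ℝ, ∀ x ≥ x₀, ∀ k : ℕ,
      5 * Real.log (Real.log (Real.log x)) ≤ (k : ℝ) →
      (k : ℝ) ≤ A * (Real.log (Real.log x)) ^ γ →
      ({n : ℕ | 0 < n ∧ (n : ℝ) ≤ x ∧ ¬ g ^ k ∣ sigma1 n}.ncard : ℝ)
        ≤ C * x * Real.exp (-(Real.log (Real.log x)) ^ δ) := by
  obtain ⟨K, hK, c, hc, hmain⟩ := exists_sum_weight_le g hg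
  have hlittle : ∀ β < (1 : ℝ), ∀ ε > (0 : ℝ), ∀ᶠ L : ℝ in Filter.atTop, L ^ β ≤ ε * L := by
    intro β hβ ε hε
    filter_upwards [(tendsto_rpow_neg_atTop (sub_pos.2 hβ)).eventually (ge_mem_nhds hε),
      Filter.eventually_gt_atTop 0] with L hL hL0
    have h := mul_le_mul_of_nonneg_right hL hL0.le
    rwa [← Real.rpow_add_one hL0.ne', neg_sub, sub_add_cancel] at h
  have hev : ∀ᶠ x : ℝ in Filter.atTop, 1 ≤ x ∧ 1 ≤ Real.log x ∧
      A * (Real.log (Real.log x)) ^ γ + (Real.log (Real.log x)) ^ δ ≤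
        c * Real.log (Real.log x) := by
    have hLL := Real.tendsto_log_atTop.comp Real.tendsto_log_atTop
    filter_upwards [Filter.eventually_ge_atTop 1,
      Real.tendsto_log_atTop.eventually (Filter.eventually_ge_atTop 1),
      hLL.eventually (hlittle γ hγ.2 (c / (2 * A)) (by positivity)),
      hLL.eventually (hlittle δ hδ.2 (c / 2) (by positivity))] with x h1 h2 h3 h4
    simp only [Function.comp] at h3 h4
    refine ⟨h1, h2, ?_⟩
    have h5 := mul_le_mul_of_nonneg_left h3 hA.le
    have e : A * (c / (2 * A) * Real.log (Real.log x)) = c / 2 * Real.log (Real.log x) := by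
      field_simp
    linarith
  obtain ⟨x₀, hx₀⟩ := Filter.eventually_atTop.1 hev
  refine ⟨K, hK, x₀, fun x hx k _ hk => ?_⟩
  obtain ⟨hx1, hlog, hcomp⟩ := hx₀ x hx
  obtain ⟨S, hS, hsum⟩ := hmain x hx1 hlog
  have hsub : {n : ℕ | 0 < n ∧ (n : ℝ) ≤ x ∧ ¬ g ^ k ∣ sigma1 n} ⊆
      ↑((Finset.Ioc 0 ⌊x⌋₊).filter fun n => ¬ g ^ k ∣ sigma1 n) := by
    rintro n ⟨h0, hnx, hndvd⟩
    exact Finset.mem_coe.2 (Finset.mem_filter.2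
      ⟨Finset.mem_Ioc.2 ⟨h0, Nat.le_floor hnx⟩, hndvd⟩)
  have hcard := Set.ncard_le_ncard hsub (Finset.finite_toSet _)
  rw [Set.ncard_coe_finset] at hcard
  have hweight : ∀ n ∈ (Finset.Ioc 0 ⌊x⌋₊).filter (fun n => ¬ g ^ k ∣ sigma1 n),
      (1 : ℝ) ≤ 2 ^ k * weight S n := by
    intro n hn
    obtain ⟨hn, hndvd⟩ := Finset.mem_filter.1 hn
    have hlt : (exactPrimes S n).card ≤ k := by
      by_contra! h
      exact hndvd (pow_dvd_sigma1 hS (Finset.mem_Ioc.1 hn).1.ne' h.le)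
    have := pow_le_pow_of_le_one (by norm_num : (0 : ℝ) ≤ 1 / 2) (by norm_num) hlt
    calc (1 : ℝ) = 2 ^ k * (1 / 2) ^ k := by rw [← mul_pow]; norm_num
      _ ≤ _ := by unfold weight; gcongr
  have h2k : (2 : ℝ) ^ k ≤ Real.exp (A * (Real.log (Real.log x)) ^ γ) := by
    rw [← Real.rpow_natCast, Real.rpow_def_of_pos two_pos]
    refine Real.exp_le_exp.2 (le_trans ?_ hk)
    have := Real.log_two_lt_d9
    nlinarith [(Nat.cast_nonneg k : (0 : ℝ) ≤ k)]
  calc ({n : ℕ | 0 < n ∧ (n : ℝ) ≤ x ∧ ¬ g ^ k ∣ sigma1 n}.ncard : ℝ)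
      ≤ ((Finset.Ioc 0 ⌊x⌋₊).filter fun n => ¬ g ^ k ∣ sigma1 n).card := by exact_mod_cast hcard
    _ = ∑ n ∈ (Finset.Ioc 0 ⌊x⌋₊).filter (fun n => ¬ g ^ k ∣ sigma1 n), (1 : ℝ) := by simp
    _ ≤ ∑ n ∈ (Finset.Ioc 0 ⌊x⌋₊).filter (fun n => ¬ g ^ k ∣ sigma1 n), 2 ^ k * weight S n :=
        Finset.sum_le_sum hweight
    _ ≤ ∑ n ∈ Finset.Ioc 0 ⌊x⌋₊, 2 ^ k * weight S n :=
        Finset.sum_le_sum_of_subset_of_nonneg (Finset.filter_subset _ _)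
          fun n _ _ => by have := weight_pos S n; positivity
    _ ≤ Real.exp (A * (Real.log (Real.log x)) ^ γ) *
          (K * x * Real.exp (-c * Real.log (Real.log x))) := by
        rw [← Finset.mul_sum]
        exact mul_le_mul h2k hsum (Finset.sum_nonneg fun n _ => (weight_pos S n).le)
          (Real.exp_nonneg _)
    _ = K * x * Real.exp (A * (Real.log (Real.log x)) ^ γ + -c * Real.log (Real.log x)) := by
        rw [Real.exp_add]; ring
    _ ≤ _ := by
        gcongr
        linarith
end

section
/- Let $g \geq 3$ be an integer and let $\mathcal{D} \subsetneq \{0,1,\dots,g-1\}$ be a nonempty proper subset with $0 \in \mathcal{D}$. Then for every positive integer $k$ and every real $x \geq 1$, the number of positive integers $n \leq x$ such that every base-$g$ digit of $s(n)$ lies in $\mathcal{D}$ and $g^k \mid \sigma(n)$ is at most $|\mathcal{D}|^k \lfloor x/g^k \rfloor + |\mathcal{D}|^k$. -/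
/-- The hypothesis `0 ∈ D` covers the positions beyond the end of the list `Nat.digits g m`. -/
lemma div_pow_mod_mem {g m : ℕ} (hg : 2 ≤ g) {D : Finset ℕ} (h0D : 0 ∈ D)
    (h : ∀ d ∈ Nat.digits g m, d ∈ D) (i : ℕ) : m / g ^ i % g ∈ D := by
  rw [← Nat.getD_digits m i hg]
  by_cases hi : i < (Nat.digits g m).length
  · rw [List.getD_eq_getElem _ _ hi]
    exact h _ (List.getElem_mem hi)
  · rw [List.getD_eq_default _ _ (not_lt.mp hi)]
    exact h0D

lemma mod_pow_eq_of_digits_eq {g a b : ℕ} (k : ℕ)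
    (h : ∀ i < k, a / g ^ i % g = b / g ^ i % g) : a % g ^ k = b % g ^ k := by
  induction k with
  | zero => simp [Nat.mod_one]
  | succ k ih =>
    rw [Nat.mod_pow_succ, Nat.mod_pow_succ, ih fun i hi => h i (by omega), h k (by omega)]

lemma sOfN_add_self {n : ℕ} (hn : 0 < n) : sOfN n + n = sigma1 n :=
  Nat.sub_add_cancel <| Finset.single_le_sum (f := fun d => d) (fun _ _ => Nat.zero_le _)
    (Nat.mem_divisors_self n hn.ne')

/-- For `g ≥ 3`, a nonempty proper subset `D ⊊ {0,…,g-1}` with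
`0 ∈ D`, every `k ≥ 1` and `x ≥ 1`, the number of `n ≤ x` with all base-`g`
digits of `s(n)` in `D` and `g^k ∣ σ(n)` is at most `|D|^k·⌊x/g^k⌋ + |D|^k`. -/
theorem stmt5 (g : ℕ) (hg : 3 ≤ g) (D : Finset ℕ) (hD : D.Nonempty)
    (hDsub : D ⊂ Finset.range g) (h0D : 0 ∈ D)
    (k : ℕ) (hk : 0 < k) (x : ℝ) (hx : 1 ≤ x) :
    {n : ℕ | 0 < n ∧ (n : ℝ) ≤ x ∧
        (∀ d ∈ Nat.digits g (sOfN n), d ∈ D) ∧ g ^ k ∣ sigma1 n}.ncard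
      ≤ D.card ^ k * ⌊x / (g : ℝ) ^ k⌋₊ + D.card ^ k := by
  set N := ⌊x / (g : ℝ) ^ k⌋₊ with hN
  let T : Finset (ℕ × (Fin k → ℕ)) :=
    Finset.range (N + 1) ×ˢ Fintype.piFinset fun _ : Fin k => D
  have hT : (T : Set (ℕ × (Fin k → ℕ))).ncard = D.card ^ k * N + D.card ^ k := by
    rw [Set.ncard_coe_finset, Finset.card_product, Finset.card_range, Fintype.card_piFinset_const]
    ring
  rw [← hT]
  refine Set.ncard_le_ncard_of_injOn
    (fun n => (n / g ^ k, fun i : Fin k => sOfN n / g ^ (i : ℕ) % g)) ?_ ?_ T.finite_toSet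
  · rintro n ⟨-, hnx, hdig, -⟩
    have hq : n / g ^ k ≤ N := by
      rw [hN, ← Nat.cast_pow, Nat.floor_div_natCast]
      exact Nat.div_le_div_right (Nat.le_floor hnx)
    simp only [T, Finset.mem_coe, Finset.mem_product, Finset.mem_range, Fintype.mem_piFinset]
    exact ⟨by omega, fun i => div_pow_mod_mem (by omega) h0D hdig i⟩
  · rintro a ⟨ha, -, -, hda⟩ b ⟨hb, -, -, hdb⟩ hab
    obtain ⟨hquot, hvec⟩ := Prod.mk.inj hab
    have hs : sOfN a ≡ sOfN b [MOD g ^ k] :=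
      mod_pow_eq_of_digits_eq k fun i hi => congrFun hvec ⟨i, hi⟩
    have hsum : sOfN a + a ≡ sOfN b + b [MOD g ^ k] := by
      rw [sOfN_add_self ha, sOfN_add_self hb]
      exact (Nat.modEq_zero_iff_dvd.mpr hda).trans (Nat.modEq_zero_iff_dvd.mpr hdb).symm
    have hmod : a % g ^ k = b % g ^ k := hs.add_left_cancel hsum
    rw [← Nat.div_add_mod a (g ^ k), ← Nat.div_add_mod b (g ^ k), hquot, hmod]
end
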